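/- Assume the cost c : 𝒳 → ℝ has linear growth and ℳ(μ̌) ≠ ∅. If c is upper semi-continuous, then the map ℝ₊ ∋ ε ↦ P̄_ε(μ̌) ∈ ℝ is non-decreasing, continuous and concave. -/

import Mathlib

open MeasureTheory Filter

namespace MMOT

/-- Path space `𝒳 = (ℝ^d)^T`. -/
abbrev Path (T d : ℕ) := Fin T → Fin d → ℝ

/-- σ-algebra generated by the coordinates `X_0, …, X_t` (0-indexed). -/
noncomputable def pastSigma (T d : ℕ) (t : ℕ) : MeasurableSpace (Path T d) :=
  ⨆ s : Fin T, ⨆ _ : (s : ℕ) ≤ t, MeasurableSpace.comap (fun x => x s) inferInstance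

def HasMarginals {T d : ℕ} (π : Measure (Path T d)) (μ : Fin T → Fin d → Measure ℝ) : Prop :=
  ∀ t i, π.map (fun x => x t i) = μ t i

/-- `E_π[X_{t+1,i} | X_0,…,X_t]`. -/
noncomputable def condNext {T d : ℕ} (π : Measure (Path T d)) (t : ℕ) (ht : t + 1 < T)
    (i : Fin d) : Path T d → ℝ :=
  π[fun x => x ⟨t + 1, ht⟩ i | pastSigma T d t]

def IsMartingaleMeasure {T d : ℕ} (π : Measure (Path T d)) : Prop :=
  ∀ (t : ℕ) (ht : t + 1 < T) (i : Fin d),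
    condNext π t ht i =ᵐ[π] fun x => x ⟨t, Nat.lt_of_succ_lt ht⟩ i

/-- The set `ℳ(μ̌)` of calibrated martingale measures. -/
def MartSet {T d : ℕ} (μ : Fin T → Fin d → Measure ℝ) : Set (Measure (Path T d)) :=
  {π | IsProbabilityMeasure π ∧ HasMarginals π μ ∧ IsMartingaleMeasure π}

/-- The relaxed set `ℳ_ε(μ̌)`: calibrated measures whose martingale defect is at most `ε`. -/
def MartSetEps {T d : ℕ} (μ : Fin T → Fin d → Measure ℝ) (ε : ℝ) :
    Set (Measure (Path T d)) :=
  {π | IsProbabilityMeasure π ∧ HasMarginals π μ ∧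
    ∀ (t : ℕ) (ht : t + 1 < T),
      ∫ x, ∑ i, |condNext π t ht i x - x ⟨t, Nat.lt_of_succ_lt ht⟩ i| ∂π ≤ ε}

def primalVals {T d : ℕ} (c : Path T d → ℝ) (S : Set (Measure (Path T d))) : Set ℝ :=
  {r | ∃ π ∈ S, Integrable c π ∧ r = ∫ x, c x ∂π}

noncomputable def PbarEps {T d : ℕ} (μ : Fin T → Fin d → Measure ℝ) (c : Path T d → ℝ)
    (ε : ℝ) : ℝ :=
  sSup (primalVals c (MartSetEps μ ε))

noncomputable def PlowEps {T d : ℕ} (μ : Fin T → Fin d → Measure ℝ) (c : Path T d → ℝ)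
    (ε : ℝ) : ℝ :=
  sInf (primalVals c (MartSetEps μ ε))

open Topology

def GG {T d : ℕ} (x : Path T d) : ℝ := 1 + ∑ t, ∑ i, |x t i|

lemma GG_cont {T d : ℕ} : Continuous (GG : Path T d → ℝ) := by
  unfold GG; fun_prop

lemma GG_coord {T d : ℕ} (x : Path T d) (t : Fin T) (i : Fin d) : |x t i| ≤ GG x := by
  have h1 : |x t i| ≤ ∑ i, |x t i| :=
    Finset.single_le_sum (f := fun i => |x t i|) (fun _ _ => abs_nonneg _) (Finset.mem_univ i)
  have h2 : ∑ i, |x t i| ≤ ∑ t, ∑ i, |x t i| :=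
    Finset.single_le_sum (f := fun t => ∑ i, |x t i|)
      (fun _ _ => Finset.sum_nonneg fun _ _ => abs_nonneg _) (Finset.mem_univ t)
  unfold GG; linarith

lemma int_coord {T d : ℕ} {μ : Fin T → Fin d → Measure ℝ}
    (hmom : ∀ t i, Integrable (fun y : ℝ => y) (μ t i)) {π : Measure (Path T d)}
    (hπ : HasMarginals π μ) (t : Fin T) (i : Fin d) : Integrable (fun x => x t i) π := by
  have h := hmom t i
  rw [← hπ t i] at h
  exact (integrable_map_measure (by fun_prop)
    (show Measurable (fun x : Path T d => x t i) by fun_prop).aemeasurable).1 h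

lemma int_GG {T d : ℕ} {μ : Fin T → Fin d → Measure ℝ}
    (hmom : ∀ t i, Integrable (fun y : ℝ => y) (μ t i)) {π : Measure (Path T d)}
    [IsProbabilityMeasure π] (hπ : HasMarginals π μ) : Integrable GG π := by
  unfold GG
  refine (integrable_const _).add (integrable_finsetSum _ fun t _ => integrable_finsetSum _ fun i _ => ?_)
  exact (int_coord hmom hπ t i).abs

lemma integral_GG {T d : ℕ} {μ : Fin T → Fin d → Measure ℝ}
    (hmom : ∀ t i, Integrable (fun y : ℝ => y) (μ t i)) {π : Measure (Path T d)}
    [IsProbabilityMeasure π] (hπ : HasMarginals π μ) :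
    ∫ x, GG x ∂π = 1 + ∑ t, ∑ i, ∫ y, |y| ∂(μ t i) := by
  have hi : ∀ t i, Integrable (fun x : Path T d => |x t i|) π :=
    fun t i => (int_coord hmom hπ t i).abs
  unfold GG
  rw [integral_add (integrable_const _)
    (integrable_finsetSum _ fun t _ => integrable_finsetSum _ fun i _ => hi t i),
    integral_finsetSum _ (fun t _ => integrable_finsetSum _ fun i _ => hi t i)]
  congr 1
  · simp
  · refine Finset.sum_congr rfl fun t _ => ?_
    rw [integral_finsetSum _ (fun i _ => hi t i)]
    refine Finset.sum_congr rfl fun i _ => ?_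
    rw [← hπ t i, integral_map (show Measurable (fun x : Path T d => x t i) by fun_prop).aemeasurable (by fun_prop)]

lemma int_lin {T d : ℕ} {μ : Fin T → Fin d → Measure ℝ}
    (hmom : ∀ t i, Integrable (fun y : ℝ => y) (μ t i)) {π : Measure (Path T d)}
    [IsProbabilityMeasure π] (hπ : HasMarginals π μ) {c : Path T d → ℝ} (hc : Measurable c)
    {K : ℝ} (hK : ∀ x, |c x| ≤ K * GG x) : Integrable c π :=
  ((int_GG hmom hπ).const_mul K).mono' hc.aestronglyMeasurable (ae_of_all _ hK)

lemma pastSigma_le (T d t : ℕ) : pastSigma T d t ≤ (inferInstance : MeasurableSpace (Path T d)) := by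
  unfold pastSigma
  refine iSup_le fun s => iSup_le fun _ => ?_
  exact (measurable_pi_apply s).comap_le

lemma meas_past {T d t : ℕ} (s : Fin T) (hs : (s : ℕ) ≤ t) :
    Measurable[pastSigma T d t] (fun x : Path T d => x s) := by
  have : MeasurableSpace.comap (fun x : Path T d => x s) inferInstance ≤ pastSigma T d t :=
    le_iSup_of_le s (le_iSup_of_le hs le_rfl)
  exact Measurable.mono (comap_measurable _) this le_rfl

lemma core {T d : ℕ} {μ : Fin T → Fin d → Measure ℝ}
    (hmom : ∀ t i, Integrable (fun y : ℝ => y) (μ t i)) {π : Measure (Path T d)}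
    [IsProbabilityMeasure π] (hπ : HasMarginals π μ) (t : ℕ) (ht : t + 1 < T) (i : Fin d)
    (h : Path T d → ℝ) (hm : Measurable[pastSigma T d t] h) (hb : ∀ x, |h x| ≤ 1) :
    ∫ x, h x * (x ⟨t + 1, ht⟩ i - x ⟨t, Nat.lt_of_succ_lt ht⟩ i) ∂π =
    ∫ x, h x * (condNext π t ht i x - x ⟨t, Nat.lt_of_succ_lt ht⟩ i) ∂π := by
  have hle := pastSigma_le T d t
  have hm' : Measurable h := hm.mono hle le_rfl
  have hI : ∀ f : Path T d → ℝ, Integrable f π → Integrable (fun x => h x * f x) π := fun f hf =>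
    hf.bdd_mul hm'.aestronglyMeasurable (ae_of_all _ hb)
  have i1 := int_coord hmom hπ ⟨t + 1, ht⟩ i
  have i2 := int_coord hmom hπ ⟨t, Nat.lt_of_succ_lt ht⟩ i
  have i3 : Integrable (condNext π t ht i) π := integrable_condExp
  simp only [mul_sub]
  rw [integral_sub (hI _ i1) (hI _ i2), integral_sub (hI _ i3) (hI _ i2)]
  congr 1
  have e := condExp_mul_of_stronglyMeasurable_left (μ := π) (m := pastSigma T d t)
    hm.stronglyMeasurable (hI _ i1) i1
  rw [← integral_condExp hle]
  exact integral_congr_ae e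

lemma int_defect {T d : ℕ} {μ : Fin T → Fin d → Measure ℝ}
    (hmom : ∀ t i, Integrable (fun y : ℝ => y) (μ t i)) {π : Measure (Path T d)}
    (hπ : HasMarginals π μ) (t : ℕ) (ht : t + 1 < T) (i : Fin d) :
    Integrable (fun x => condNext π t ht i x - x ⟨t, Nat.lt_of_succ_lt ht⟩ i) π :=
  Integrable.sub integrable_condExp (int_coord hmom hπ ⟨t, Nat.lt_of_succ_lt ht⟩ i)

lemma lemA {T d : ℕ} {μ : Fin T → Fin d → Measure ℝ}
    (hmom : ∀ t i, Integrable (fun y : ℝ => y) (μ t i)) {π : Measure (Path T d)}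
    [IsProbabilityMeasure π] (hπ : HasMarginals π μ) (t : ℕ) (ht : t + 1 < T)
    (h : Fin d → Path T d → ℝ) (hm : ∀ i, Measurable[pastSigma T d t] (h i))
    (hb : ∀ i x, |h i x| ≤ 1) :
    ∑ i, ∫ x, h i x * (x ⟨t + 1, ht⟩ i - x ⟨t, Nat.lt_of_succ_lt ht⟩ i) ∂π ≤
    ∫ x, ∑ i, |condNext π t ht i x - x ⟨t, Nat.lt_of_succ_lt ht⟩ i| ∂π := by
  rw [integral_finsetSum _ (fun i _ => (int_defect hmom hπ t ht i).abs)]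
  refine Finset.sum_le_sum fun i _ => ?_
  rw [core hmom hπ t ht i (h i) (hm i) (hb i)]
  refine integral_mono_ae ((int_defect hmom hπ t ht i).bdd_mul (c := 1)
    ((hm i).mono (pastSigma_le T d t) le_rfl).aestronglyMeasurable (ae_of_all _ (hb i)))
    (int_defect hmom hπ t ht i).abs (ae_of_all _ fun x => ?_)
  refine (le_abs_self _).trans ?_
  simp only [abs_mul]
  exact mul_le_of_le_one_left (abs_nonneg _) (hb i x)

lemma lemB {T d : ℕ} {μ : Fin T → Fin d → Measure ℝ}
    (hmom : ∀ t i, Integrable (fun y : ℝ => y) (μ t i)) {π : Measure (Path T d)}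
    [IsProbabilityMeasure π] (hπ : HasMarginals π μ) (t : ℕ) (ht : t + 1 < T) :
    ∃ h : Fin d → Path T d → ℝ, (∀ i, Measurable[pastSigma T d t] (h i)) ∧
    (∀ i x, |h i x| ≤ 1) ∧
    ∑ i, ∫ x, h i x * (x ⟨t + 1, ht⟩ i - x ⟨t, Nat.lt_of_succ_lt ht⟩ i) ∂π =
    ∫ x, ∑ i, |condNext π t ht i x - x ⟨t, Nat.lt_of_succ_lt ht⟩ i| ∂π := by
  have hD : ∀ i, Measurable[pastSigma T d t]
      (fun x => condNext π t ht i x - x ⟨t, Nat.lt_of_succ_lt ht⟩ i) := by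
    intro i
    refine Measurable.sub (stronglyMeasurable_condExp.measurable) ?_
    exact (measurable_pi_apply i).comp (meas_past (d := d) ⟨t, Nat.lt_of_succ_lt ht⟩ le_rfl)
  have hm : ∀ i, Measurable[pastSigma T d t] (fun x => if 0 ≤ condNext π t ht i x - x ⟨t, Nat.lt_of_succ_lt ht⟩ i then (1:ℝ) else -1) := by
    intro i
    refine Measurable.ite ?_ measurable_const measurable_const
    exact (hD i) measurableSet_Ici
  have hb : ∀ (i : Fin d) (x : Path T d), |if 0 ≤ condNext π t ht i x - x ⟨t, Nat.lt_of_succ_lt ht⟩ i then (1:ℝ) else -1| ≤ 1 := by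
    intro i x; split_ifs <;> simp
  refine ⟨_, hm, hb, ?_⟩
  rw [integral_finsetSum _ (fun i _ => (int_defect hmom hπ t ht i).abs)]
  refine Finset.sum_congr rfl fun i _ => ?_
  rw [core hmom hπ t ht i _ (hm i) (hb i)]
  congr 1; ext x
  split_ifs with h
  · rw [abs_of_nonneg h, one_mul]
  · rw [abs_of_neg (not_le.1 h)]; ring

lemma mixture {T d : ℕ} {μ : Fin T → Fin d → Measure ℝ}
    (hmom : ∀ t i, Integrable (fun y : ℝ => y) (μ t i)) {π₁ π₂ : Measure (Path T d)} {ε₁ ε₂ : ℝ}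
    (h₁ : π₁ ∈ MartSetEps μ ε₁) (h₂ : π₂ ∈ MartSetEps μ ε₂) {a b : ℝ} (ha : 0 ≤ a) (hb : 0 ≤ b)
    (hab : a + b = 1) :
    ENNReal.ofReal a • π₁ + ENNReal.ofReal b • π₂ ∈ MartSetEps μ (a * ε₁ + b * ε₂) := by
  obtain ⟨p1, m1, d1⟩ := h₁
  obtain ⟨p2, m2, d2⟩ := h₂
  have hs : ENNReal.ofReal a + ENNReal.ofReal b = 1 := by
    rw [← ENNReal.ofReal_add ha hb, hab, ENNReal.ofReal_one]
  have p : IsProbabilityMeasure (ENNReal.ofReal a • π₁ + ENNReal.ofReal b • π₂) :=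
    ⟨by simp [hs]⟩
  have m : HasMarginals (ENNReal.ofReal a • π₁ + ENNReal.ofReal b • π₂) μ := by
    intro t i
    rw [Measure.map_add _ _ (by fun_prop), Measure.map_smul, Measure.map_smul, m1, m2,
      ← add_smul, hs, one_smul]
  refine ⟨p, m, fun t ht => ?_⟩
  obtain ⟨h, hm, hb1, he⟩ := lemB hmom m t ht
  rw [← he]
  have A1 := (lemA hmom m1 t ht h hm hb1).trans (d1 t ht)
  have A2 := (lemA hmom m2 t ht h hm hb1).trans (d2 t ht)
  have key : ∀ i, ∫ x, h i x * (x ⟨t + 1, ht⟩ i - x ⟨t, Nat.lt_of_succ_lt ht⟩ i)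
      ∂(ENNReal.ofReal a • π₁ + ENNReal.ofReal b • π₂) =
      a * ∫ x, h i x * (x ⟨t + 1, ht⟩ i - x ⟨t, Nat.lt_of_succ_lt ht⟩ i) ∂π₁ +
      b * ∫ x, h i x * (x ⟨t + 1, ht⟩ i - x ⟨t, Nat.lt_of_succ_lt ht⟩ i) ∂π₂ := by
    intro i
    have hI : ∀ (π : Measure (Path T d)), HasMarginals π μ → Integrable (fun x => h i x * (x ⟨t + 1, ht⟩ i - x ⟨t, Nat.lt_of_succ_lt ht⟩ i)) π := by
      intro π hπ
      exact ((int_coord hmom hπ _ i).sub (int_coord hmom hπ _ i)).bdd_mul (c := 1)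
        ((hm i).mono (pastSigma_le T d t) le_rfl).aestronglyMeasurable (ae_of_all _ (hb1 i))
    rw [integral_add_measure ((hI _ m1).smul_measure ENNReal.ofReal_ne_top)
      ((hI _ m2).smul_measure ENNReal.ofReal_ne_top), integral_smul_measure, integral_smul_measure,
      ENNReal.toReal_ofReal ha, ENNReal.toReal_ofReal hb, smul_eq_mul, smul_eq_mul]
  simp only [key, Finset.sum_add_distrib, ← Finset.mul_sum]
  gcongr

lemma lsc_liminf {Ω : Type*} [MeasurableSpace Ω] [TopologicalSpace Ω] [OpensMeasurableSpace Ω]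
    {μ : Measure Ω} {μs : ℕ → Measure Ω} {f : Ω → ℝ} (f_cont : LowerSemicontinuous f) (f_nn : 0 ≤ f)
    (h_opens : ∀ G, IsOpen G → μ G ≤ atTop.liminf (fun i ↦ μs i G)) :
    ∫⁻ x, ENNReal.ofReal (f x) ∂μ ≤ atTop.liminf (fun i ↦ ∫⁻ x, ENNReal.ofReal (f x) ∂(μs i)) := by
  simp_rw [lintegral_eq_lintegral_meas_lt _ (Eventually.of_forall f_nn) f_cont.measurable.aemeasurable]
  calc ∫⁻ (t : ℝ) in Set.Ioi 0, μ {a | t < f a}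
      ≤ ∫⁻ (t : ℝ) in Set.Ioi 0, atTop.liminf (fun i ↦ (μs i) {a | t < f a}) :=
        lintegral_mono (fun t ↦ h_opens _ (f_cont.isOpen_preimage t))
    _ ≤ atTop.liminf (fun i ↦ ∫⁻ (t : ℝ) in Set.Ioi 0, (μs i) {a | t < f a}) :=
        lintegral_liminf_le (fun n ↦ Antitone.measurable (fun s t hst ↦
            measure_mono (fun ω hω ↦ lt_of_le_of_lt hst hω)))

lemma usc_limit {T d : ℕ} {μ : Fin T → Fin d → Measure ℝ}
    (hmom : ∀ t i, Integrable (fun y : ℝ => y) (μ t i)) {π : ProbabilityMeasure (Path T d)}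
    {πs : ℕ → ProbabilityMeasure (Path T d)} (hlim : Tendsto πs atTop (𝓝 π))
    (hπ : HasMarginals (π : Measure (Path T d)) μ)
    (hπs : ∀ n, HasMarginals (πs n : Measure (Path T d)) μ)
    {c : Path T d → ℝ} (hc : UpperSemicontinuous c) {K : ℝ} (hK : ∀ x, |c x| ≤ K * GG x)
    {r : ℕ → ℝ} {r0 : ℝ} (hr : Tendsto r atTop (𝓝 r0)) (hle : ∀ n, r n ≤ ∫ x, c x ∂(πs n : Measure (Path T d))) :
    r0 ≤ ∫ x, c x ∂(π : Measure (Path T d)) := by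
  have hcm : Measurable c := hc.measurable
  set C := 1 + ∑ t, ∑ i, ∫ y, |y| ∂(μ t i) with hC
  have hf : LowerSemicontinuous (fun x => K * GG x + (- c x)) := by
    refine LowerSemicontinuous.add (continuous_const.mul GG_cont).lowerSemicontinuous ?_
    intro x y hy
    have := hc x (-y) (by linarith)
    filter_upwards [this] with z hz
    linarith
  have f0 : (0 : Path T d → ℝ) ≤ (fun x => K * GG x + (- c x)) := fun x => by
    have := (le_abs_self _).trans (hK x)
    simp only [Pi.zero_apply]; linarith
  have hint : ∀ ρ : Measure (Path T d), IsProbabilityMeasure ρ → HasMarginals ρ μ →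
      ∫⁻ x, ENNReal.ofReal (K * GG x + (- c x)) ∂ρ = ENNReal.ofReal (K * C - ∫ x, c x ∂ρ) := by
    intro ρ hρ hm
    have i1 := (int_GG hmom hm).const_mul K
    have i2 := (int_lin hmom hm hcm hK).neg
    have i3 : Integrable (fun x => K * GG x + (- c x)) ρ := i1.add i2
    rw [← ofReal_integral_eq_lintegral_ofReal i3 (ae_of_all _ f0)]
    congr 1
    have := integral_add i1 i2
    simp only [Pi.neg_apply] at this
    rw [this, integral_const_mul, integral_GG hmom hm, integral_neg]
    ring
  have key := lsc_liminf hf f0 (fun G hG => ProbabilityMeasure.le_liminf_measure_open_of_tendsto hlim hG)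
  rw [hint _ inferInstance hπ] at key
  have hn : ∀ n, ∫⁻ x, ENNReal.ofReal (K * GG x + (- c x)) ∂(πs n : Measure (Path T d)) ≤
      ENNReal.ofReal (K * C - r n) := fun n => by
    rw [hint _ inferInstance (hπs n)]
    exact ENNReal.ofReal_le_ofReal (by linarith [hle n])
  have hlim2 : Tendsto (fun n => ENNReal.ofReal (K * C - r n)) atTop (𝓝 (ENNReal.ofReal (K * C - r0))) :=
    ENNReal.tendsto_ofReal (tendsto_const_nhds.sub hr)
  have key2 := key.trans ((liminf_le_liminf (Eventually.of_forall hn)).trans_eq hlim2.liminf_eq)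
  have hle0 : r0 ≤ K * C := by
    refine le_of_tendsto' hr fun n => (hle n).trans ?_
    rw [hC, ← integral_GG hmom (hπs n), ← integral_const_mul]
    exact integral_mono (int_lin hmom (hπs n) hcm hK) ((int_GG hmom (hπs n)).const_mul K)
      fun x => (le_abs_self _).trans (hK x)
  rw [ENNReal.ofReal_le_ofReal_iff (by linarith)] at key2
  linarith

def proj {T d : ℕ} (t : ℕ) (x : Path T d) : {s : Fin T // (s : ℕ) ≤ t} → Fin d → ℝ := fun s => x s

lemma proj_cont {T d t : ℕ} : Continuous (proj (T := T) (d := d) t) := by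
  unfold proj; fun_prop

lemma proj_meas {T d t : ℕ} : Measurable[pastSigma T d t] (proj (T := T) (d := d) t) := by
  refine (@measurable_pi_iff _ _ _ (pastSigma T d t) _ _).2 fun s => ?_
  exact meas_past s.1 s.2

lemma past_le_proj {T d t : ℕ} : pastSigma T d t ≤ MeasurableSpace.comap (proj (T := T) (d := d) t) inferInstance := by
  refine iSup_le fun s => iSup_le fun hs => ?_
  rintro A ⟨B, hB, rfl⟩
  exact ⟨(fun y => y ⟨s, hs⟩) ⁻¹' B, measurable_pi_apply _ hB, rfl⟩

lemma setInt_zero {T d t : ℕ} {π : Measure (Path T d)} [IsProbabilityMeasure π] {u v : Path T d → ℝ}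
    (hum : Measurable u) (hvm : Measurable v)
    (hu : Integrable u π) (hv : Integrable v π)
    (h : ∀ f : BoundedContinuousFunction ({s : Fin T // (s : ℕ) ≤ t} → Fin d → ℝ) ℝ,
      ∫ x, f (proj t x) * (u x - v x) ∂π = 0) (A : Set (Path T d))
    (hA : MeasurableSet[pastSigma T d t] A) : ∫ x in A, u x ∂π = ∫ x in A, v x ∂π := by
  have pm : Measurable (proj (T := T) (d := d) t) := proj_cont.measurable
  set w : Path T d → ℝ := fun x => u x - v x with hw
  have hwi : Integrable w π := hu.sub hv
  have hwm : Measurable w := hum.sub hvm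
  have fin : ∀ g : Path T d → ℝ, Integrable g π → IsFiniteMeasure (π.withDensity fun x => ENNReal.ofReal (g x)) :=
    fun g hg => isFiniteMeasure_withDensity_ofReal hg.2
  have e : (π.withDensity fun x => ENNReal.ofReal (w x)).map (proj t) =
      (π.withDensity fun x => ENNReal.ofReal (- w x)).map (proj t) := by
    have := fin _ hwi
    have := fin _ hwi.neg
    simp only [Pi.neg_apply] at this
    have cv : ∀ g : Path T d → ℝ, Measurable g → ∀ f : BoundedContinuousFunction ({s : Fin T // (s : ℕ) ≤ t} → Fin d → ℝ) ℝ,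
        ∫ y, f y ∂((π.withDensity fun x => ENNReal.ofReal (g x)).map (proj t)) =
        ∫ x, max (g x) 0 * f (proj t x) ∂π := by
      intro g hg f
      rw [integral_map pm.aemeasurable f.continuous.aestronglyMeasurable,
        integral_withDensity_eq_integral_toReal_smul (by fun_prop) (by simp)]
      simp [ENNReal.toReal_ofReal', smul_eq_mul]
    apply ext_of_forall_integral_eq_of_IsFiniteMeasure
    intro f
    rw [cv _ hwm, cv (fun x => - w x) hwm.neg, ← sub_eq_zero]
    have bi : ∀ g : Path T d → ℝ, Integrable g π → Integrable (fun x => g x * f (proj t x)) π := by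
      intro g hg
      exact hg.mul_bdd (c := ‖f‖) (f.continuous.comp proj_cont).aestronglyMeasurable
        (ae_of_all _ fun x => f.norm_coe_le_norm _)
    rw [← integral_sub (bi _ hwi.pos_part) (bi (fun x => max (- w x) 0) hwi.neg.pos_part)]
    refine Eq.trans ?_ (h f)
    congr 1; ext x
    rw [← sub_mul, mul_comm]
    congr 1
    rcases le_total (w x) 0 with h | h
    · rw [max_eq_right h, max_eq_left (by linarith)]; simp [hw]
    · rw [max_eq_left h, max_eq_right (by linarith)]; simp [hw]
  obtain ⟨B, hB, rfl⟩ := past_le_proj A hA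
  have hAm : MeasurableSet (proj (T := T) (d := d) t ⁻¹' B) := pm hB
  have e2 := congrArg (fun m => m B) e
  simp only [Measure.map_apply pm hB, withDensity_apply _ hAm] at e2
  rw [← sub_eq_zero, ← integral_sub hu.integrableOn hv.integrableOn,
    integral_eq_lintegral_pos_part_sub_lintegral_neg_part (hwi.integrableOn), e2, sub_self]

lemma limit_mem {T d : ℕ} {μ : Fin T → Fin d → Measure ℝ}
    (hprob : ∀ t i, IsProbabilityMeasure (μ t i))
    (hmom : ∀ t i, Integrable (fun y : ℝ => y) (μ t i)) {π : ProbabilityMeasure (Path T d)}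
    {πs : ℕ → ProbabilityMeasure (Path T d)} (hlim : Tendsto πs atTop (𝓝 π))
    {ε : ℕ → ℝ} (hε : Tendsto ε atTop (𝓝 0))
    (hπs : ∀ n, (πs n : Measure (Path T d)) ∈ MartSetEps μ (ε n)) :
    (π : Measure (Path T d)) ∈ MartSetEps μ 0 := by
  have hπ : HasMarginals (π : Measure (Path T d)) μ := by
    intro t i
    have hc : Continuous (fun x : Path T d => x t i) := by fun_prop
    have h1 := ProbabilityMeasure.tendsto_map_of_tendsto_of_continuous πs π hlim hc
    have h2 : Tendsto (fun n => (πs n).map hc.measurable.aemeasurable) atTop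
        (𝓝 (⟨μ t i, hprob t i⟩ : ProbabilityMeasure ℝ)) := by
      refine tendsto_const_nhds.congr fun n => ?_
      apply Subtype.ext
      exact ((hπs n).2.1 t i).symm
    exact congrArg (fun ν : ProbabilityMeasure ℝ => (ν : Measure ℝ)) (tendsto_nhds_unique h1 h2)
  refine ⟨inferInstance, hπ, fun t ht => ?_⟩
  have main : ∀ i, condNext (π : Measure (Path T d)) t ht i =ᵐ[(π : Measure (Path T d))]
      fun x => x ⟨t, Nat.lt_of_succ_lt ht⟩ i := by
    intro i
    have base : ∀ f : BoundedContinuousFunction ({s : Fin T // (s : ℕ) ≤ t} → Fin d → ℝ) ℝ,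
        (∀ y, |f y| ≤ 1) → 0 ≤ ∫ x, f (proj t x) * (x ⟨t + 1, ht⟩ i - x ⟨t, Nat.lt_of_succ_lt ht⟩ i) ∂(π : Measure (Path T d)) := by
      intro f hf
      have hcont : Continuous (fun x : Path T d => f (proj t x) * (x ⟨t + 1, ht⟩ i - x ⟨t, Nat.lt_of_succ_lt ht⟩ i)) :=
        (f.continuous.comp proj_cont).mul (by fun_prop)
      have hε' : Tendsto (fun n => - ε n) atTop (𝓝 0) := by simpa using hε.neg
      refine usc_limit hmom hlim hπ (fun n => (hπs n).2.1) hcont.upperSemicontinuous (K := 2) ?_ hε' ?_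
      · intro x
        rw [abs_mul]
        have h1 := GG_coord x ⟨t + 1, ht⟩ i
        have h2 := GG_coord x ⟨t, Nat.lt_of_succ_lt ht⟩ i
        have h3 := abs_sub (x ⟨t + 1, ht⟩ i) (x ⟨t, Nat.lt_of_succ_lt ht⟩ i)
        have h4 := mul_le_of_le_one_left (abs_nonneg (x ⟨t + 1, ht⟩ i - x ⟨t, Nat.lt_of_succ_lt ht⟩ i)) (hf (proj t x))
        linarith
      · intro n
        have hA := (lemA hmom (hπs n).2.1 t ht (fun j x => if j = i then - f (proj t x) else 0)
          (fun j => by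
            split_ifs
            · exact (f.continuous.measurable.comp proj_meas).neg
            · exact measurable_const)
          (fun j x => by
            split_ifs
            · rw [abs_neg]; exact hf _
            · simp)).trans ((hπs n).2.2 t ht)
        rw [Finset.sum_eq_single i (fun j _ hj => by simp [hj]) (by simp)] at hA
        simp only [if_true, neg_mul, integral_neg] at hA
        linarith
    have base2 : ∀ f : BoundedContinuousFunction ({s : Fin T // (s : ℕ) ≤ t} → Fin d → ℝ) ℝ,
        0 ≤ ∫ x, f (proj t x) * (x ⟨t + 1, ht⟩ i - x ⟨t, Nat.lt_of_succ_lt ht⟩ i) ∂(π : Measure (Path T d)) := by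
      intro f
      have hp : 0 < ‖f‖ + 1 := by positivity
      have := base ((‖f‖ + 1)⁻¹ • f) (fun y => by
        have := f.norm_coe_le_norm y
        rw [Real.norm_eq_abs] at this
        simp only [BoundedContinuousFunction.coe_smul, smul_eq_mul, abs_mul, abs_inv, abs_of_pos hp]
        rw [inv_mul_le_iff₀ hp]; linarith)
      simp only [BoundedContinuousFunction.coe_smul, smul_eq_mul, mul_assoc] at this
      rw [integral_const_mul] at this
      exact (mul_nonneg_iff_of_pos_left (inv_pos.2 hp)).1 this
    have base3 : ∀ f : BoundedContinuousFunction ({s : Fin T // (s : ℕ) ≤ t} → Fin d → ℝ) ℝ,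
        ∫ x, f (proj t x) * (x ⟨t + 1, ht⟩ i - x ⟨t, Nat.lt_of_succ_lt ht⟩ i) ∂(π : Measure (Path T d)) = 0 := by
      intro f
      have h1 := base2 f
      have h2 := base2 (-f)
      simp only [BoundedContinuousFunction.coe_neg, Pi.neg_apply, neg_mul, integral_neg] at h2
      linarith
    have i1 := int_coord hmom hπ ⟨t + 1, ht⟩ i
    have i2 := int_coord hmom hπ ⟨t, Nat.lt_of_succ_lt ht⟩ i
    refine (ae_eq_condExp_of_forall_setIntegral_eq (pastSigma_le T d t) i1
      (fun _ _ _ => i2.integrableOn) (fun A hA _ => ?_) ?_).symm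
    · exact (setInt_zero (by fun_prop) (by fun_prop) i1 i2 base3 A hA).symm
    · have : Measurable[pastSigma T d t] (fun x : Path T d => x ⟨t, Nat.lt_of_succ_lt ht⟩ i) :=
        (measurable_pi_apply i).comp (meas_past (d := d) ⟨t, Nat.lt_of_succ_lt ht⟩ le_rfl)
      exact this.stronglyMeasurable.aestronglyMeasurable
  apply le_of_eq
  apply integral_eq_zero_of_ae
  filter_upwards [ae_all_iff.2 main] with x hx
  simp [hx]

lemma tight {T d : ℕ} {μ : Fin T → Fin d → Measure ℝ}
    (hmom : ∀ t i, Integrable (fun y : ℝ => y) (μ t i)) :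
    IsTightMeasureSet {ρ : Measure (Path T d) | IsProbabilityMeasure ρ ∧ HasMarginals ρ μ} := by
  apply isTightMeasureSet_of_tendsto_measure_norm_gt
  set C := 1 + ∑ t, ∑ i, ∫ y, |y| ∂(μ t i) with hC
  have hb : ∀ r : ℝ, 0 < r → (⨆ ρ ∈ {ρ : Measure (Path T d) | IsProbabilityMeasure ρ ∧ HasMarginals ρ μ},
      ρ {x | r < ‖x‖}) ≤ ENNReal.ofReal (C / r) := by
    intro r hr
    refine iSup₂_le fun ρ hρ => ?_
    obtain ⟨hp, hm⟩ := hρ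
    have G0 : ∀ x : Path T d, 0 ≤ GG x := fun x => by unfold GG; positivity
    have hsub : {x : Path T d | r < ‖x‖} ⊆ {x | r ≤ GG x} := by
      intro x hx
      refine (le_of_lt (show r < ‖x‖ from hx)).trans ?_
      refine (pi_norm_le_iff_of_nonneg (G0 x)).2 fun t => (pi_norm_le_iff_of_nonneg (G0 x)).2 fun i => ?_
      exact GG_coord x t i
    have hM := mul_meas_ge_le_integral_of_nonneg (μ := ρ) (ae_of_all _ G0) (int_GG hmom hm) r
    rw [integral_GG hmom hm] at hM
    refine (measure_mono hsub).trans ?_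
    rw [← ofReal_measureReal]
    apply ENNReal.ofReal_le_ofReal
    rw [le_div_iff₀ hr, mul_comm]
    exact hM
  have hl : Tendsto (fun r : ℝ => ENNReal.ofReal (C / r)) atTop (𝓝 0) := by
    rw [← ENNReal.ofReal_zero]
    exact ENNReal.tendsto_ofReal (tendsto_const_nhds.div_atTop tendsto_id)
  refine tendsto_of_tendsto_of_tendsto_of_le_of_le' tendsto_const_nhds hl
    (Eventually.of_forall fun _ => zero_le) ?_
  filter_upwards [eventually_gt_atTop 0] with r hr using hb r hr

lemma compactness {T d : ℕ} {μ : Fin T → Fin d → Measure ℝ}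
    (hmom : ∀ t i, Integrable (fun y : ℝ => y) (μ t i))
    (πs : ℕ → ProbabilityMeasure (Path T d))
    (hπs : ∀ n, HasMarginals (πs n : Measure (Path T d)) μ) :
    ∃ π : ProbabilityMeasure (Path T d), ∃ φ : ℕ → ℕ, StrictMono φ ∧
      Tendsto (πs ∘ φ) atTop (𝓝 π) := by
  have hc : IsCompact (closure (Set.range πs)) := by
    apply isCompact_closure_of_isTightMeasureSet
    refine (tight hmom).subset ?_
    rintro _ ⟨_, ⟨n, rfl⟩, rfl⟩
    exact ⟨inferInstance, hπs n⟩
  obtain ⟨π, -, φ, h1, h2⟩ := hc.tendsto_subseq (x := πs) (fun n => subset_closure ⟨n, rfl⟩)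
  exact ⟨π, φ, h1, h2⟩

/-- Proposition: regularity of .
If the cost `c` is measurable, of linear growth and upper semi-continuous, and `ℳ(μ̌) ≠ ∅`,
then `ε ↦ P̄_ε(μ̌)` is non-decreasing, continuous and concave on `ℝ₊`. -/
theorem pbarEps_monotone_continuous_concave {T d : ℕ}
    (μ : Fin T → Fin d → Measure ℝ)
    (hprob : ∀ t i, IsProbabilityMeasure (μ t i))
    (hmom : ∀ t i, Integrable (fun y : ℝ => y) (μ t i))
    (hne : (MartSet μ).Nonempty)
    (c : Path T d → ℝ) (hmeas : Measurable c)
    (K : ℝ) (hgrowth : ∀ x, |c x| ≤ K * (1 + ∑ t, ∑ i, |x t i|))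
    (husc : UpperSemicontinuous c) :
    MonotoneOn (fun ε => PbarEps μ c ε) (Set.Ici 0) ∧
    ContinuousOn (fun ε => PbarEps μ c ε) (Set.Ici 0) ∧
    ConcaveOn ℝ (Set.Ici 0) (fun ε => PbarEps μ c ε) := by
  have hK : ∀ x, |c x| ≤ K * GG x := hgrowth
  have hsub : ∀ {ε ε' : ℝ}, ε ≤ ε' → MartSetEps μ ε ⊆ MartSetEps μ ε' := fun h π hπ =>
    ⟨hπ.1, hπ.2.1, fun t ht => (hπ.2.2 t ht).trans h⟩
  have hci : ∀ {ε : ℝ} {π : Measure (Path T d)}, π ∈ MartSetEps μ ε → Integrable c π := fun {ε π} hπ => by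
    have := hπ.1
    exact int_lin hmom hπ.2.1 hmeas hK
  have hbdd : ∀ ε, BddAbove (primalVals c (MartSetEps μ ε)) := by
    intro ε
    refine ⟨K * (1 + ∑ t, ∑ i, ∫ y, |y| ∂(μ t i)), ?_⟩
    rintro _ ⟨π, hπ, hi, rfl⟩
    have := hπ.1
    rw [← integral_GG hmom hπ.2.1, ← integral_const_mul]
    exact integral_mono hi ((int_GG hmom hπ.2.1).const_mul K) fun x => (le_abs_self _).trans (hK x)
  have hle : ∀ {ε : ℝ} {π : Measure (Path T d)}, π ∈ MartSetEps μ ε → ∫ x, c x ∂π ≤ PbarEps μ c ε :=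
    fun hπ => le_csSup (hbdd _) ⟨_, hπ, hci hπ, rfl⟩
  obtain ⟨π0, p0, m0, M0⟩ := hne
  have h0 : π0 ∈ MartSetEps μ 0 := by
    refine ⟨p0, m0, fun t ht => le_of_eq ?_⟩
    apply integral_eq_zero_of_ae
    filter_upwards [ae_all_iff.2 (M0 t ht)] with x hx
    simp [hx]
  have hnon : ∀ {ε : ℝ}, 0 ≤ ε → (primalVals c (MartSetEps μ ε)).Nonempty := fun h =>
    ⟨_, π0, hsub h h0, hci h0, rfl⟩
  have happ : ∀ {ε r : ℝ}, 0 ≤ ε → r < PbarEps μ c ε → ∃ π ∈ MartSetEps μ ε, r < ∫ x, c x ∂π := by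
    intro ε r h hr
    obtain ⟨_, ⟨π, hπ, _, rfl⟩, h2⟩ := exists_lt_of_lt_csSup (hnon h) hr
    exact ⟨π, hπ, h2⟩
  have hmono : MonotoneOn (fun ε => PbarEps μ c ε) (Set.Ici 0) := by
    intro a ha b hb hab
    refine csSup_le (hnon ha) ?_
    rintro _ ⟨π, hπ, _, rfl⟩
    exact hle (hsub hab hπ)
  have hconc : ConcaveOn ℝ (Set.Ici 0) (fun ε => PbarEps μ c ε) := by
    refine ⟨convex_Ici 0, fun x hx y hy a b ha hb hab => ?_⟩
    simp only [smul_eq_mul]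
    refine le_of_forall_pos_le_add fun δ hδ => ?_
    obtain ⟨π1, h1, l1⟩ := happ hx (sub_lt_self _ hδ)
    obtain ⟨π2, h2, l2⟩ := happ hy (sub_lt_self _ hδ)
    have := hle (mixture hmom h1 h2 ha hb hab)
    rw [integral_add_measure ((hci h1).smul_measure ENNReal.ofReal_ne_top)
      ((hci h2).smul_measure ENNReal.ofReal_ne_top), integral_smul_measure, integral_smul_measure,
      ENNReal.toReal_ofReal ha, ENNReal.toReal_ofReal hb, smul_eq_mul, smul_eq_mul] at this
    have e1 := mul_le_mul_of_nonneg_left l1.le ha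
    have e2 := mul_le_mul_of_nonneg_left l2.le hb
    have e3 : a * δ + b * δ = δ := by rw [← add_mul, hab, one_mul]
    rw [mul_sub] at e1 e2
    linarith
  refine ⟨hmono, ?_, hconc⟩
  intro x hx
  rcases eq_or_lt_of_le (show (0:ℝ) ≤ x from hx) with rfl | hpos
  · have key : ∀ δ > 0, ∃ n : ℕ, PbarEps μ c (1 / ((n : ℝ) + 1)) < PbarEps μ c 0 + δ := by
      intro δ hδ
      by_contra! hcon
      have hn : ∀ n : ℕ, ∃ π ∈ MartSetEps μ (1 / ((n : ℝ) + 1)), PbarEps μ c 0 + δ / 2 < ∫ x, c x ∂π :=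
        fun n => happ (by positivity) (lt_of_lt_of_le (by linarith) (hcon n))
      choose π hπ hπ2 using hn
      obtain ⟨ρ, φ, hφ, hlim⟩ := compactness hmom (fun n => ⟨π n, (hπ n).1⟩) (fun n => (hπ n).2.1)
      have hρ := limit_mem hprob hmom hlim
        (tendsto_one_div_add_atTop_nhds_zero_nat.comp hφ.tendsto_atTop) (fun n => hπ (φ n))
      have := usc_limit hmom hlim hρ.2.1 (fun n => (hπ (φ n)).2.1) husc hK
        (tendsto_const_nhds (x := PbarEps μ c 0 + δ / 2)) (fun n => (hπ2 (φ n)).le)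
      have := hle hρ
      linarith
    rw [Metric.continuousWithinAt_iff]
    intro δ hδ
    obtain ⟨n, hn⟩ := key δ hδ
    refine ⟨1 / ((n : ℝ) + 1), by positivity, fun {y} hy hd => ?_⟩
    have hy' : (0:ℝ) ≤ y := hy
    rw [Real.dist_eq, sub_zero, abs_of_nonneg hy'] at hd
    have h1 := hmono hx hy hy'
    have h2 := hmono hy (show (0:ℝ) ≤ 1 / ((n : ℝ) + 1) by positivity) hd.le
    simp only at h1 h2
    rw [Real.dist_eq, abs_lt]
    constructor <;> linarith
  · have := hconc.continuousOn_interior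
    rw [interior_Ici] at this
    exact (this.continuousAt (Ioi_mem_nhds hpos)).continuousWithinAt

end MMOT
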